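/- arXiv:2409.03490 — 8 statements merged into one kernel-verified Lean document; each statement's English description precedes it below -/
import Mathlib

section
/- Every Hausdorff locally compact topology on the additive semigroup of non-negative integers (ℕ, +) that is shift-continuous (i.e., for every n ∈ ℕ the maps m ↦ n + m and m ↦ m + n are continuous) is the discrete topology. -/
/-!
A locally compact Hausdorff space is Baire. For every `n`, the set `{k | n ≤ k}` is open (its
complement is finite) and countable, so by Baire's theorem it contains an isolated point `k`. The
preimage of `{k}` under the shift by `k - n` is `{n}`, so `n` is isolated as well.
-/

open Topology

/-- In a Baire `T1` topology on `ℕ`, isolated points occur beyond every bound. -/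
lemma exists_isOpen_singleton_ge [TopologicalSpace ℕ] [T1Space ℕ] [BaireSpace ℕ] (n : ℕ) :
    ∃ k, n ≤ k ∧ IsOpen ({k} : Set ℕ) := by
  by_contra! h
  have hd : Dense (⋂ i : ℕ, ({n + i}ᶜ : Set ℕ)) :=
    dense_iInter_of_isOpen_nat (fun _ => isOpen_compl_singleton) fun i =>
      dense_compl_singleton_iff_not_open.2 (h (n + i) (Nat.le_add_right n i))
  have hs : (⋂ i : ℕ, ({n + i}ᶜ : Set ℕ)) ⊆ Set.Iio n := by
    intro x hx
    by_contra hxn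
    have hle : n ≤ x := not_lt.1 hxn
    exact Set.mem_iInter.1 hx (x - n) (by simp; omega)
  -- A finite dense subset of a `T1` space is the whole space, but `Set.Iio n` omits `n`.
  have hu := (hd.mono hs).closure_eq
  rw [(Set.finite_Iio n).isClosed.closure_eq] at hu
  exact lt_irrefl n (hu ▸ Set.mem_univ n : n ∈ Set.Iio n)

/-- Every Hausdorff locally compact shift-continuous topology on the additive
semigroup `(ℕ, +)` is discrete. -/
theorem locally_compact_shift_continuous_topology_on_nat_is_discrete
    (τ : TopologicalSpace ℕ) (hT2 : @T2Space ℕ τ) (hLC : @LocallyCompactSpace ℕ τ)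
    (hsc : ∀ n : ℕ, Continuous[τ, τ] (fun m => n + m) ∧ Continuous[τ, τ] (fun m => m + n)) :
    τ = ⊥ := by
  -- Instance search would otherwise find the standard discrete topology on `ℕ`.
  have hT1 : @T1Space ℕ τ := @T2Space.t1Space ℕ τ hT2
  have hB : @BaireSpace ℕ τ := by
    letI := τ
    infer_instance
  refine @eq_bot_of_singletons_open ℕ τ fun n => ?_
  obtain ⟨k, hnk, hk⟩ := @exists_isOpen_singleton_ge τ hT1 hB n
  have hp := (hsc (k - n)).2.isOpen_preimage _ hk
  have he : (fun m => m + (k - n)) ⁻¹' ({k} : Set ℕ) = {n} := by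
    ext m
    simp only [Set.mem_preimage, Set.mem_singleton_iff]
    omega
  rwa [he] at hp
end

section
/- Let (ω,+)⁰ = ℕ ∪ {∞} be the additive semigroup of non-negative integers with an adjoined absorbing element ∞ (so n + ∞ = ∞ + n = ∞ + ∞ = ∞ for all n ∈ ℕ; in Lean this is ℕ∞ = WithTop ℕ with its addition). Then every Hausdorff locally compact shift-continuous topology on (ω,+)⁰ is either compact or discrete. -/
/-!
Every natural number is an isolated point. Shifts pull an open singleton `{m}` back to `{k}` for
every `k ≤ m`, so if `n` is not isolated then no `m ≥ n` is; by the Baire category theorem the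
finite set `{0, …, n - 1, ∞}` is then dense, and being closed it is the whole space, which is absurd.

Suppose `∞` is not isolated and let `K` be a compact neighbourhood of `∞`. As all other points are
isolated, `K \ V` is finite for every neighbourhood `V` of `∞`. Taking `V = {x | 1 + x ∈ K}` shows
that `K` is closed under successors up to finitely many exceptions; since `K` is infinite, it
contains all large naturals. Thus the space is the union of `K` and a finite set.
-/

open Topology

/-- Shift-continuity, the Hausdorff property and the Baire property isolate every natural number. -/
lemma isOpen_singleton_natCast [TopologicalSpace (WithTop ℕ)] [T2Space (WithTop ℕ)]
    [LocallyCompactSpace (WithTop ℕ)]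
    (hsc : ∀ a : WithTop ℕ, Continuous (fun b => a + b)) (n : ℕ) :
    IsOpen ({(n : WithTop ℕ)} : Set (WithTop ℕ)) := by
  by_contra hn
  have hlarge : ∀ i : ℕ, ¬ IsOpen ({((n + i : ℕ) : WithTop ℕ)} : Set (WithTop ℕ)) := by
    intro i hi
    apply hn
    convert hi.preimage (hsc (i : WithTop ℕ)) using 1
    ext x
    induction x using WithTop.recTopCoe with
    | top =>
      simp only [Set.mem_singleton_iff, Set.mem_preimage, add_top]
      exact iff_of_false (WithTop.top_ne_natCast n) (WithTop.top_ne_natCast (n + i))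
    | coe x =>
      have h1 : ((x : WithTop ℕ) = (n : WithTop ℕ)) ↔ x = n := WithTop.coe_inj
      have h2 : ((i : WithTop ℕ) + (x : WithTop ℕ) = ((n + i : ℕ) : WithTop ℕ)) ↔ i + x = n + i :=
        WithTop.coe_inj (a := i + x) (b := n + i)
      exact h1.trans ((by omega : x = n ↔ i + x = n + i).trans h2.symm)
  have hd : Dense (⋂ i : ℕ, ({((n + i : ℕ) : WithTop ℕ)}ᶜ : Set (WithTop ℕ))) :=
    dense_iInter_of_isOpen (fun i => isOpen_compl_singleton)
      (fun i => dense_compl_singleton_iff_not_open.2 (hlarge i))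
  have hfin : (⋂ i : ℕ, ({((n + i : ℕ) : WithTop ℕ)}ᶜ : Set (WithTop ℕ))).Finite := by
    refine (((Set.finite_Iio n).image (fun k : ℕ => (k : WithTop ℕ))).insert ⊤).subset ?_
    intro x hx
    induction x using WithTop.recTopCoe with
    | top => exact Or.inl rfl
    | coe x =>
      refine Or.inr ⟨x, ?_, rfl⟩
      by_contra hx'
      have hle : n ≤ x := not_lt.1 hx'
      refine Set.mem_iInter.1 hx (x - n) ?_
      rw [Nat.add_sub_cancel' hle]
      rfl
  have huniv := hfin.isClosed.closure_eq.symm.trans hd.closure_eq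
  have hmem : (n : WithTop ℕ) ∈ ⋂ i : ℕ, ({((n + i : ℕ) : WithTop ℕ)}ᶜ : Set (WithTop ℕ)) :=
    huniv ▸ Set.mem_univ _
  exact Set.mem_iInter.1 hmem 0 rfl

/-- Every Hausdorff locally compact shift-continuous topology on `(ω,+)⁰ = WithTop ℕ`
(ℕ with an adjoined absorbing element `∞ = ⊤`) is either compact or discrete. -/
theorem locally_compact_shift_continuous_topology_on_nat_with_zero_compact_or_discrete
    (τ : TopologicalSpace (WithTop ℕ)) (hT2 : @T2Space (WithTop ℕ) τ)
    (hLC : @LocallyCompactSpace (WithTop ℕ) τ)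
    (hsc : ∀ a : WithTop ℕ,
      Continuous[τ, τ] (fun b => a + b) ∧ Continuous[τ, τ] (fun b => b + a)) :
    @CompactSpace (WithTop ℕ) τ ∨ τ = ⊥ := by
  have hiso := isOpen_singleton_natCast (fun a => (hsc a).1)
  by_cases htop : IsOpen ({⊤} : Set (WithTop ℕ))
  · right
    refine (discreteTopology_iff_isOpen_singleton.2 fun x => ?_).eq_bot
    induction x using WithTop.recTopCoe with
    | top => exact htop
    | coe x => exact hiso x
  left
  obtain ⟨K, hK, hKtop⟩ := exists_compact_mem_nhds (⊤ : WithTop ℕ)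
  -- Every neighbourhood of `∞` is open, since its other points are isolated.
  have hopen : ∀ V : Set (WithTop ℕ), V ∈ 𝓝 ⊤ → IsOpen V := by
    intro V hV
    refine isOpen_iff_mem_nhds.2 fun x hx => ?_
    induction x using WithTop.recTopCoe with
    | top => exact hV
    | coe x => exact Filter.mem_of_superset ((hiso x).mem_nhds rfl) (Set.singleton_subset_iff.2 hx)
  have hdiff : ∀ V : Set (WithTop ℕ), V ∈ 𝓝 ⊤ → (K \ V).Finite := by
    intro V hV
    refine (hK.diff (hopen V hV)).finite (isDiscrete_iff_forall_mem_exists_isOpen.2 ?_)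
    intro x hx
    induction x using WithTop.recTopCoe with
    | top => exact absurd (mem_of_mem_nhds hV) hx.2
    | coe x =>
      exact ⟨_, hiso x, Set.inter_eq_left.2 (Set.singleton_subset_iff.2 hx)⟩
  have hKinf : K.Infinite := by
    intro hfin
    apply htop
    have h1 : IsOpen (K \ (K \ {⊤})) :=
      (hopen K hKtop).sdiff (hfin.subset Set.sdiff_subset).isClosed
    rwa [Set.sdiff_sdiff_cancel_left
      (Set.singleton_subset_iff.2 (mem_of_mem_nhds hKtop))] at h1
  have hV : (fun b : WithTop ℕ => 1 + b) ⁻¹' K ∈ 𝓝 ⊤ :=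
    (hsc 1).1.continuousAt.preimage_mem_nhds (by simpa using hKtop)
  obtain ⟨N, hN⟩ := ((hdiff _ hV).preimage
    (WithTop.coe_injective.injOn (s := (fun k : ℕ => (k : WithTop ℕ)) ⁻¹' _))).bddAbove
  have hstep : ∀ k : ℕ, N < k → (k : WithTop ℕ) ∈ K → ((k + 1 : ℕ) : WithTop ℕ) ∈ K := by
    intro k hk hkK
    by_contra hk'
    refine absurd (hN (a := k) ⟨hkK, fun h => hk' ?_⟩) (not_le.2 hk)
    have h2 : (1 : WithTop ℕ) + (k : WithTop ℕ) ∈ K := h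
    rw [add_comm] at h2
    exact_mod_cast h2
  obtain ⟨m, hmN, hmK⟩ : ∃ m : ℕ, N < m ∧ (m : WithTop ℕ) ∈ K := by
    by_contra! hno
    refine hKinf ((((Set.finite_Iic N).image (fun k : ℕ => (k : WithTop ℕ))).insert ⊤).subset ?_)
    intro x hx
    induction x using WithTop.recTopCoe with
    | top => exact Or.inl rfl
    | coe x => exact Or.inr ⟨x, not_lt.1 fun h => hno x h hx, rfl⟩
  have htail : ∀ k : ℕ, m ≤ k → (k : WithTop ℕ) ∈ K := by
    intro k hk
    induction k, hk using Nat.le_induction with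
    | base => exact hmK
    | succ k hk ih => exact hstep k (by omega) ih
  refine ⟨?_⟩
  have hcover : K ∪ (fun k : ℕ => (k : WithTop ℕ)) '' Set.Iio m = Set.univ := by
    refine Set.eq_univ_of_forall fun x => ?_
    induction x using WithTop.recTopCoe with
    | top => exact Or.inl (mem_of_mem_nhds hKtop)
    | coe x =>
      rcases lt_or_ge x m with h | h
      · exact Or.inr ⟨x, h, rfl⟩
      · exact Or.inl (htail x h)
  rw [← hcover]
  exact hK.union ((Set.finite_Iio m).image _).isCompact
end

section
/- Let τ be any Hausdorff locally compact shift-continuous topology on 𝒞₊(p,q)⁰. Then every nonzero element of 𝒞₊(p,q)⁰ (i.e., every element of 𝒞₊(p,q)) is an isolated point of (𝒞₊(p,q)⁰, τ). -/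
/-!
Right multiplication by the idempotent `(k, k)` fixes `0` and exactly those `(m, n)` with `k ≤ n`.
As the fixed-point set of a continuous self-map of a Hausdorff space it is closed, so its complement
`{(m, n) : m ≤ n < k}` is open. This complement is finite, and in a Hausdorff space every point of a
finite open set is isolated. Taking `k = n + 1` isolates `(m, n)`.
-/

open Topology

/-- The semigroup `𝒞₊(p,q)`, modeled as pairs `(i,j)` of naturals with `i ≤ j`
(the pair `(i,j)` represents `qⁱpʲ` in the bicyclic monoid). -/
abbrev CpCarrier : Type := {p : ℕ × ℕ // p.1 ≤ p.2}

/-- Multiplication: `(k,l)·(m,n) = (k−l+m, n)` if `l < m`; `(k,n)` if `l = m`;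
`(k, l−m+n)` if `l > m`. -/
instance : Mul CpCarrier :=
  ⟨fun a b =>
    ⟨if a.1.2 < b.1.1 then (a.1.1 + (b.1.1 - a.1.2), b.1.2)
      else if a.1.2 = b.1.1 then (a.1.1, b.1.2)
      else (a.1.1, a.1.2 - b.1.1 + b.1.2), by
      have ha := a.2; have hb := b.2
      split_ifs <;> dsimp only <;> omega⟩⟩

/-- `𝒞₊(p,q)⁰`: the semigroup `𝒞₊(p,q)` with an adjoined zero. -/
abbrev Cp0 : Type := WithZero CpCarrier

/-- The element `(i,j)` of `𝒞₊(p,q)` (representing `qⁱpʲ = bⁱaʲ`). -/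
def CpElem (i j : ℕ) (h : i ≤ j) : CpCarrier := ⟨(i, j), h⟩

/-- The subset `𝒞₊ⁱ(p,q) = {(i, i+s) : s ∈ ℕ}` viewed inside `𝒞₊(p,q)⁰`. -/
def Ci (i : ℕ) : Set Cp0 :=
  {y | ∃ s : ℕ, y = (CpElem i (i + s) (Nat.le_add_right i s) : Cp0)}

theorem CpCarrier.mul_idem_eq_self_iff (c : CpCarrier) (k : ℕ) :
    c * CpElem k k le_rfl = c ↔ k ≤ c.1.2 := by
  obtain ⟨⟨m, n⟩, h⟩ := c
  rw [Subtype.ext_iff]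
  change (if n < k then (m + (k - n), k) else if n = k then (m, k) else (m, n - k + k)) = (m, n) ↔
    k ≤ n
  split_ifs <;> simp only [Prod.mk.injEq, true_and] <;> omega

/-- The points moved by right multiplication by `(k, k)` are nonzero with second coordinate below
`k`, and there are finitely many of them because the first coordinate is at most the second. -/
theorem Cp0.finite_moved_by_idem (k : ℕ) :
    {y : Cp0 | y * (CpElem k k le_rfl : Cp0) ≠ y}.Finite := by
  have hfin : {c : CpCarrier | c.1.2 < k}.Finite := by
    refine Set.Finite.of_finite_image (f := Subtype.val) ?_ Subtype.val_injective.injOn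
    refine ((Set.finite_Iio k).prod (Set.finite_Iio k)).subset ?_
    rintro _ ⟨c, hc, rfl⟩
    exact ⟨lt_of_le_of_lt c.2 hc, hc⟩
  refine (hfin.image (fun c : CpCarrier => (c : Cp0))).subset ?_
  intro y hy
  induction y with
  | zero => exact absurd (zero_mul _) hy
  | coe c =>
    refine ⟨c, ?_, rfl⟩
    by_contra hc
    apply hy
    rw [← WithZero.coe_mul, (c.mul_idem_eq_self_iff k).2 (not_lt.1 hc)]

/-- For any Hausdorff locally compact shift-continuous topology `τ` on `𝒞₊(p,q)⁰`,
every nonzero element is an isolated point. -/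
theorem nonzero_elements_isolated
    (τ : TopologicalSpace Cp0) (hT2 : @T2Space Cp0 τ) (hLC : @LocallyCompactSpace Cp0 τ)
    (hsc : ∀ s : Cp0, Continuous[τ, τ] (fun y => s * y) ∧ Continuous[τ, τ] (fun y => y * s)) :
    ∀ y : Cp0, y ≠ 0 → IsOpen[τ] {y} := by
  intro y hy
  induction y using WithZero.recZeroCoe with
  | zero => exact absurd rfl hy
  | coe c =>
    set e : Cp0 := (CpElem (c.1.2 + 1) (c.1.2 + 1) le_rfl : Cp0) with he
    have hopen : IsOpen {z : Cp0 | z * e ≠ z} := isOpen_ne_fun (hsc e).2 continuous_id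
    have hfin : {z : Cp0 | z * e ≠ z}.Finite := Cp0.finite_moved_by_idem _
    have hmem : (c : Cp0) * e ≠ c := by
      rw [he, ← WithZero.coe_mul, Ne, WithZero.coe_inj, c.mul_idem_eq_self_iff]
      omega
    have hdiff := hopen.sdiff (hfin.subset (Set.sdiff_subset (t := {(c : Cp0)}))).isClosed
    rwa [Set.sdiff_sdiff_cancel_left (Set.singleton_subset_iff.2 hmem)] at hdiff
end

section
/- Let τ be any Hausdorff locally compact shift-continuous topology on 𝒞₊(p,q)⁰. If U and V are any compact open neighbourhoods of the zero 0 in (𝒞₊(p,q)⁰, τ), then the set U \ V is finite. -/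
open Topology

/-!
Every nonzero point is isolated, so `U \ V`, a compact set avoiding `0`, is finite.

To isolate `(i, j)`, consider right multiplication by the idempotent `(j + 1, j + 1)`: it fixes `0`
and exactly those `(k, l)` with `l ≥ j + 1`. The fixed points of a continuous self-map of a
Hausdorff space form a closed set, so `{(k, l) | l ≤ j}` is open. This set is finite because
`k ≤ l`, and the points of a finite open subset of a `T1` space are isolated.
-/

lemma mul_idem_eq_iff (a : CpCarrier) (n : ℕ) : a * CpElem n n le_rfl = a ↔ n ≤ a.1.2 := by
  obtain ⟨⟨k, l⟩, h⟩ := a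
  rw [Subtype.ext_iff]
  change (if l < n then (k + (n - l), n) else if l = n then (k, n) else (k, l - n + n)) = (k, l) ↔
    n ≤ l
  split_ifs <;> simp only [Prod.mk.injEq, true_and] <;> omega

lemma finite_snd_lt (n : ℕ) : {x : Cp0 | ∃ a : CpCarrier, x = a ∧ a.1.2 < n}.Finite := by
  have h : {a : CpCarrier | a.1.2 < n}.Finite := by
    refine Set.Finite.of_finite_image (f := Subtype.val) ?_ Subtype.val_injective.injOn
    refine ((Set.finite_Iio n).prod (Set.finite_Iio n)).subset ?_
    rintro _ ⟨⟨⟨k, l⟩, hkl⟩, ha, rfl⟩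
    exact ⟨lt_of_le_of_lt hkl ha, ha⟩
  refine (h.image (fun a : CpCarrier => (a : Cp0))).subset ?_
  rintro _ ⟨a, rfl, ha⟩
  exact ⟨a, ha, rfl⟩

/-- Nonzero points are isolated: `F` below is the finite open set of all nonzero `(k, l)` with
`l ≤ j`, where `a = (i, j)`. -/
lemma isOpen_singleton_coe [TopologicalSpace Cp0] [T2Space Cp0]
    (hr : ∀ s : Cp0, Continuous fun y : Cp0 => y * s) (a : CpCarrier) :
    IsOpen ({(a : Cp0)} : Set Cp0) := by
  set n := a.1.2 + 1 with hn
  set F : Set Cp0 := {x | ∃ b : CpCarrier, x = b ∧ b.1.2 < n} with hF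
  have hFo : IsOpen F := by
    have hcl : IsClosed {x : Cp0 | x * (CpElem n n le_rfl : CpCarrier) = x} :=
      isClosed_eq (hr _) continuous_id
    convert hcl.isOpen_compl using 1
    ext x
    induction x using WithZero.recZeroCoe with
    | zero => simp [hF]
    | coe b =>
      change _ ↔ ¬ (b : Cp0) * (CpElem n n le_rfl : CpCarrier) = b
      rw [← WithZero.coe_mul, WithZero.coe_inj, mul_idem_eq_iff, not_le]
      constructor
      · rintro ⟨c, hc, h⟩
        rwa [WithZero.coe_inj.1 hc]
      · exact fun h => ⟨b, rfl, h⟩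
  have hfin : (F \ {(a : Cp0)}).Finite := (finite_snd_lt n).subset Set.sdiff_subset
  have haF : (a : Cp0) ∈ F := ⟨a, rfl, Nat.lt_succ_self _⟩
  have key := hFo.sdiff hfin.isClosed
  rwa [Set.sdiff_sdiff_cancel_left (Set.singleton_subset_iff.2 haF)] at key

/-- For any Hausdorff locally compact shift-continuous topology `τ` on `𝒞₊(p,q)⁰`,
if `U` and `V` are compact open neighbourhoods of the zero, then `U \ V` is finite. -/
theorem compact_open_nbhds_of_zero_diff_finite
    (τ : TopologicalSpace Cp0) (hT2 : @T2Space Cp0 τ) (hLC : @LocallyCompactSpace Cp0 τ)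
    (hsc : ∀ s : Cp0, Continuous[τ, τ] (fun y => s * y) ∧ Continuous[τ, τ] (fun y => y * s))
    (U V : Set Cp0)
    (hUc : @IsCompact Cp0 τ U) (hUo : IsOpen[τ] U) (hU0 : (0 : Cp0) ∈ U)
    (hVc : @IsCompact Cp0 τ V) (hVo : IsOpen[τ] V) (hV0 : (0 : Cp0) ∈ V) :
    (U \ V).Finite := by
  -- A closed subset of the compact `U`, covered by the open singletons of its points.
  have hc : IsCompact (U \ V) := hUc.diff hVo
  refine hc.finite (isDiscrete_iff_forall_mem_exists_isOpen.2 fun x hx => ?_)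
  induction x using WithZero.recZeroCoe with
  | zero => exact absurd hV0 hx.2
  | coe a =>
    refine ⟨{(a : Cp0)}, isOpen_singleton_coe (fun s => (hsc s).2) a, ?_⟩
    exact Set.inter_eq_left.2 (Set.singleton_subset_iff.2 hx)
end

section
/- Let x : ℕ → ℕ be a non-decreasing sequence and let τ_x be the topology on 𝒞₊(p,q)⁰ in which every point of 𝒞₊(p,q) is isolated and the family {U_x^n(0) : n ∈ ℕ}, where U_x^n(0) = {0} ∪ {(k, k + x_k + s) : k, s ∈ ℕ and k + x_k + s > n}, is a neighbourhood base at the zero 0. Then (𝒞₊(p,q)⁰, τ_x) is a Hausdorff locally compact topological space. -/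
/-!
A basic neighbourhood `Ux x m` omits only the pairs with second coordinate at most `m` from any
other `Ux x n`, so `Ux x n \ Ux x m` is finite. Hence every `Ux x n` is compact: what is left
outside a neighbourhood of `0` is finite. The point `(i, j)` does not belong to `Ux x j`, which
separates it from `0`; all other separations come from isolated points. A Hausdorff space in which
each point has one compact neighbourhood is locally compact.
-/

open Topology

/-- The basic neighbourhood `U_x^n(0) = {0} ∪ {(k, k + x k + s) : k + x k + s > n}`. -/
def Ux (x : ℕ → ℕ) (n : ℕ) : Set Cp0 :=
  {0} ∪ {y | ∃ k s : ℕ, k + x k + s > n ∧ y = (CpElem k (k + x k + s) (by omega) : Cp0)}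


/-- All elements of the difference have second coordinate at most `m`, and hence also first
coordinate at most `m`. -/
theorem Ux_diff_finite (x : ℕ → ℕ) (n m : ℕ) : (Ux x n \ Ux x m).Finite := by
  have hfin : {p : CpCarrier | p.1 ∈ Set.Iic m ×ˢ Set.Iic m}.Finite :=
    ((Set.finite_Iic m).prod (Set.finite_Iic m)).preimage Subtype.val_injective.injOn
  refine (hfin.image (fun p : CpCarrier => (p : Cp0))).subset ?_
  rintro y ⟨hy | ⟨k, s, -, rfl⟩, hym⟩
  · exact absurd (Or.inl hy) hym
  · have hle : k + x k + s ≤ m := by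
      by_contra h
      exact hym (Or.inr ⟨k, s, by omega, rfl⟩)
    refine ⟨CpElem k (k + x k + s) (by omega), ?_, rfl⟩
    exact ⟨Set.mem_Iic.2 (show k ≤ m by omega), Set.mem_Iic.2 hle⟩

theorem coe_notMem_Ux (x : ℕ → ℕ) (a : CpCarrier) : (a : Cp0) ∉ Ux x a.1.2 := by
  rintro (h | ⟨k, s, hks, h⟩)
  · exact WithZero.coe_ne_zero h
  · rw [WithZero.coe_inj.1 h] at hks
    exact lt_irrefl _ hks

theorem Ux_isCompact (x : ℕ → ℕ) [TopologicalSpace Cp0]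
    (hbase : Filter.HasBasis (𝓝 (0 : Cp0)) (fun _ : ℕ => True) (Ux x)) (n : ℕ) :
    IsCompact (Ux x n) := by
  rw [isCompact_iff_ultrafilter_le_nhds']
  intro f hf
  by_cases h : (f : Filter Cp0) ≤ 𝓝 0
  · exact ⟨0, Or.inl rfl, h⟩
  -- An ultrafilter not converging to `0` contains some finite `Ux x n \ Ux x m`: it is principal.
  · obtain ⟨m, hm⟩ : ∃ m, Ux x m ∉ f := by
      by_contra! hall
      exact h (hbase.ge_iff.2 fun m _ => hall m)
    have hmem : Ux x n \ Ux x m ∈ f :=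
      Filter.inter_mem hf (Ultrafilter.compl_mem_iff_notMem.2 hm)
    obtain ⟨a, ha, rfl⟩ := Ultrafilter.eq_pure_of_finite_mem (Ux_diff_finite x n m) hmem
    exact ⟨a, ha.1, pure_le_nhds a⟩

/-- For a non-decreasing `x : ℕ → ℕ`, the topology `τ_x` on `𝒞₊(p,q)⁰` in which every
nonzero point is isolated and `{U_x^n(0) : n ∈ ℕ}` is a neighbourhood base at the zero
is Hausdorff and locally compact. -/
theorem tauX_hausdorff_locallyCompact (x : ℕ → ℕ) (hx : Monotone x)
    (τ : TopologicalSpace Cp0)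
    (hiso : ∀ y : Cp0, y ≠ 0 → IsOpen[τ] {y})
    (hbase : Filter.HasBasis (@nhds Cp0 τ 0) (fun _ : ℕ => True) (Ux x)) :
    @T2Space Cp0 τ ∧ @LocallyCompactSpace Cp0 τ := by
  have hpure : ∀ y : Cp0, y ≠ 0 → 𝓝 y = pure y := fun y hy =>
    (isOpen_singleton_iff_nhds_eq_pure y).1 (hiso y hy)
  have hzero : ∀ y : Cp0, y ≠ 0 → Disjoint (𝓝 0) (𝓝 y) := by
    intro y hy
    obtain ⟨a, rfl⟩ := WithZero.ne_zero_iff_exists.1 hy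
    rw [hpure _ hy, ← Filter.principal_singleton, Filter.disjoint_principal_right]
    exact Filter.mem_of_superset (hbase.mem_of_mem (i := a.1.2) trivial)
      (Set.subset_compl_singleton_iff.2 (coe_notMem_Ux x a))
  have hT2 : T2Space Cp0 := by
    rw [t2Space_iff_disjoint_nhds]
    intro a b hab
    by_cases ha : a = 0
    · subst ha
      exact hzero b hab.symm
    by_cases hb : b = 0
    · subst hb
      exact (hzero a ha).symm
    rw [hpure a ha, hpure b hb]
    rw [← Filter.principal_singleton, ← Filter.principal_singleton,
      Filter.disjoint_principal_principal]
    exact Set.disjoint_singleton.2 hab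
  have hW : WeaklyLocallyCompactSpace Cp0 := by
    refine ⟨fun y => ?_⟩
    by_cases hy : y = 0
    · subst hy
      exact ⟨Ux x 0, Ux_isCompact x hbase 0, hbase.mem_of_mem trivial⟩
    · exact ⟨{y}, isCompact_singleton, (hiso y hy).mem_nhds rfl⟩
  exact ⟨hT2, inferInstance⟩
end

section
/- Let x : ℕ → ℕ be a non-decreasing sequence and let τ_x be the topology on 𝒞₊(p,q)⁰ in which every point of 𝒞₊(p,q) is isolated and the family {U_x^n(0) : n ∈ ℕ}, where U_x^n(0) = {0} ∪ {(k, k + x_k + s) : k, s ∈ ℕ and k + x_k + s > n}, is a neighbourhood base at the zero 0. Then the semigroup operation of 𝒞₊(p,q)⁰ is separately continuous with respect to τ_x; that is, (𝒞₊(p,q)⁰, τ_x) is a semitopological semigroup (τ_x is a shift-continuous topology). -/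
/-!
A map fixing `0` is continuous for `τ_x` as soon as it pulls each `U_x^n(0)` back to a set
containing some `U_x^m(0)`, because all other points are isolated. Both shifts by
`(k, l)`, where `k ≤ l`, satisfy this with `m = n + k + l + x k`. An element `(i, j)` lies in
`U_x^n(0)` iff `i + x i ≤ j` and `n < j`.

* Left shift: for `l ≤ i` the product is `(i - (l - k), j)`; the first coordinate does not
  grow, so `i + x i ≤ j` is preserved by monotonicity of `x`. For `i < l` the product is
  `(k, l - i + j)`, and `k + x k` is exceeded since `j` is large.
* Right shift: `j > k`, so the product is `(i, j + (l - k))`, whose second coordinate does not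
  decrease.
-/

open Topology

theorem coe_mem_Ux {x : ℕ → ℕ} {n : ℕ} {a : CpCarrier} :
    (a : Cp0) ∈ Ux x n ↔ a.1.1 + x a.1.1 ≤ a.1.2 ∧ n < a.1.2 := by
  constructor
  · rintro (h | ⟨k, s, h, e⟩)
    · exact absurd h WithZero.coe_ne_zero
    · obtain rfl := WithZero.coe_inj.1 e
      simp only [CpElem]
      omega
  · rintro ⟨h1, h2⟩
    refine Or.inr ⟨a.1.1, a.1.2 - (a.1.1 + x a.1.1), by omega, WithZero.coe_inj.2 ?_⟩
    apply Subtype.ext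
    apply Prod.ext
    · rfl
    · simp only [CpElem]
      omega

theorem zero_mem_Ux (x : ℕ → ℕ) (n : ℕ) : (0 : Cp0) ∈ Ux x n := Or.inl rfl

theorem CpCarrier.mul_val (a b : CpCarrier) :
    (a * b).1 = if a.1.2 < b.1.1 then (a.1.1 + (b.1.1 - a.1.2), b.1.2)
      else if a.1.2 = b.1.1 then (a.1.1, b.1.2)
      else (a.1.1, a.1.2 - b.1.1 + b.1.2) := rfl

theorem mul_left_mem_Ux {x : ℕ → ℕ} (hx : Monotone x) (a b : CpCarrier) (n : ℕ)
    (hb : (b : Cp0) ∈ Ux x (n + a.1.1 + a.1.2 + x a.1.1)) :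
    ((a * b : CpCarrier) : Cp0) ∈ Ux x n := by
  rw [coe_mem_Ux] at hb ⊢
  have ha := a.2
  rw [CpCarrier.mul_val]
  split_ifs with h1 h2
  · have := hx (show a.1.1 + (b.1.1 - a.1.2) ≤ b.1.1 by omega)
    dsimp only
    omega
  · dsimp only
    omega
  · dsimp only
    omega

theorem mul_right_mem_Ux {x : ℕ → ℕ} (a b : CpCarrier) (n : ℕ)
    (hb : (b : Cp0) ∈ Ux x (n + a.1.1 + a.1.2 + x a.1.1)) :
    ((b * a : CpCarrier) : Cp0) ∈ Ux x n := by
  rw [coe_mem_Ux] at hb ⊢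
  have ha := a.2
  rw [CpCarrier.mul_val]
  split_ifs with h1 h2 <;> dsimp only <;> omega

/-- Continuity criterion: since nonzero points are isolated, a self-map fixing `0` only has to
be checked on the basic neighbourhoods of `0`. -/
theorem continuous_of_Ux {x : ℕ → ℕ} (τ : TopologicalSpace Cp0)
    (hiso : ∀ y : Cp0, y ≠ 0 → IsOpen[τ] {y})
    (hbase : Filter.HasBasis (@nhds Cp0 τ 0) (fun _ : ℕ => True) (Ux x))
    (f : Cp0 → Cp0) (h0 : f 0 = 0)
    (h : ∀ n, ∃ m, ∀ b : CpCarrier, (b : Cp0) ∈ Ux x m → f b ∈ Ux x n) :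
    Continuous[τ, τ] f := by
  rw [continuous_iff_continuousAt]
  intro y
  by_cases hy : y = 0
  · subst hy
    unfold ContinuousAt
    rw [h0, hbase.tendsto_iff hbase]
    intro n _
    obtain ⟨m, hm⟩ := h n
    refine ⟨m, trivial, fun z hz => ?_⟩
    induction z using WithZero.recZeroCoe with
    | zero => rw [h0]; exact zero_mem_Ux x n
    | coe b => exact hm b hz
  · unfold ContinuousAt
    rw [(isOpen_singleton_iff_nhds_eq_pure y).1 (hiso y hy)]
    exact tendsto_pure_nhds f y

/-- For a non-decreasing `x : ℕ → ℕ`, the topology `τ_x` on `𝒞₊(p,q)⁰` in which every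
nonzero point is isolated and `{U_x^n(0) : n ∈ ℕ}` is a neighbourhood base at the zero
is shift-continuous: `(𝒞₊(p,q)⁰, τ_x)` is a semitopological semigroup. -/
theorem tauX_shift_continuous (x : ℕ → ℕ) (hx : Monotone x)
    (τ : TopologicalSpace Cp0)
    (hiso : ∀ y : Cp0, y ≠ 0 → IsOpen[τ] {y})
    (hbase : Filter.HasBasis (@nhds Cp0 τ 0) (fun _ : ℕ => True) (Ux x)) :
    ∀ s : Cp0, Continuous[τ, τ] (fun y => s * y) ∧ Continuous[τ, τ] (fun y => y * s) := by
  intro s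
  induction s using WithZero.recZeroCoe with
  | zero =>
    simp only [zero_mul, mul_zero]
    exact ⟨continuous_const, continuous_const⟩
  | coe a =>
    exact ⟨continuous_of_Ux τ hiso hbase _ (mul_zero _)
        fun n => ⟨_, fun b hb => mul_left_mem_Ux hx a b n hb⟩,
      continuous_of_Ux τ hiso hbase _ (zero_mul _)
        fun n => ⟨_, fun b hb => mul_right_mem_Ux a b n hb⟩⟩
end

section
/- There exists a family 𝒯 of topologies on the semigroup 𝒞₊(p,q)⁰ of cardinality continuum (𝔠 = 2^ℵ⁰) such that every τ ∈ 𝒯 is Hausdorff, locally compact and shift-continuous, and for any two distinct τ₁, τ₂ ∈ 𝒯 there is no topological isomorphism between (𝒞₊(p,q)⁰, τ₁) and (𝒞₊(p,q)⁰, τ₂), i.e., no semigroup isomorphism of 𝒞₊(p,q)⁰ onto itself that is simultaneously a homeomorphism from (𝒞₊(p,q)⁰, τ₁) to (𝒞₊(p,q)⁰, τ₂). -/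
/-!
Every nonzero point is made isolated, and a set `A` of nonzero elements is chosen so that
`A ∪ {0}` is the one-point compactification of the discrete set `A`. Such a topology is always
Hausdorff and locally compact (`t2Space_zeroTopology`, `locallyCompactSpace_zeroTopology`). Shifts
of `𝒞₊(p,q)` are finite-to-one, so a shift is continuous as soon as it maps all but finitely many
points of `A` into `A`. For a monotone `φ : ℕ → ℕ`, this holds for the region
`A = {(i,j) : φ i ≤ j}`: if `j` is large, a shift of `(i,j)` by `(k,l)` does not decrease `j`, and
it either does not increase `i` or moves the point to row `k`, where all points with `φ k ≤ j` lie
in `A`; and only finitely many points have a bounded `j`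
(`continuous_mul_left_region`, `continuous_mul_right_region`).

Regions that differ by infinitely many points give different topologies. For a sequence of bits `x`,
take `φ i = 2 * i + x (i.unpair.1)`; it is monotone since a bit is at most `1`, and
each bit is repeated infinitely often, so distinct sequences give distinct topologies
(`zeroTopology_bitBound_injective`). This yields continuum many.

Finally, `𝒞₊(p,q)⁰` has no automorphism except the identity (`automorphism_apply`): an automorphism
fixes each idempotent `(k,k)`, because these form a chain of order type `ω`, and the element `(i,j)`
is determined by which idempotents fix it on the left (those with `k ≤ i`) and on the right (those
with `k ≤ j`). So distinct topologies are never topologically isomorphic.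
-/

open Topology

open Filter

/-! ### Finiteness properties of the shifts -/

lemma finite_snd_le (N : ℕ) : {x : CpCarrier | x.1.2 ≤ N}.Finite := by
  refine Set.Finite.of_finite_image (f := Subtype.val)
    (((Set.finite_Iic N).prod (Set.finite_Iic N)).subset ?_) Subtype.val_injective.injOn
  rintro _ ⟨x, hx, rfl⟩
  exact ⟨le_trans x.2 hx, hx⟩

lemma mul_fst (a b : CpCarrier) : (a * b).1.1 = a.1.1 + (b.1.1 - a.1.2) := by
  change (Prod.fst (ite _ _ (ite _ _ _))) = _
  split_ifs <;> dsimp only <;> omega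

lemma mul_snd (a b : CpCarrier) : (a * b).1.2 = (a.1.2 - b.1.1) + b.1.2 := by
  change (Prod.snd (ite _ _ (ite _ _ _))) = _
  split_ifs <;> dsimp only <;> omega

lemma tendsto_mul_left_cofinite (s : CpCarrier) :
    Tendsto (fun x : CpCarrier => s * x) cofinite cofinite := by
  refine Tendsto.cofinite_of_finite_preimage_singleton fun y => ?_
  refine (finite_snd_le y.1.2).subset ?_
  rintro x rfl
  simp only [Set.mem_ofPred_eq, mul_snd]
  omega

lemma tendsto_mul_right_cofinite (s : CpCarrier) :
    Tendsto (fun x : CpCarrier => x * s) cofinite cofinite := by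
  refine Tendsto.cofinite_of_finite_preimage_singleton fun y => ?_
  refine (finite_snd_le (y.1.2 + s.1.1)).subset ?_
  rintro x rfl
  simp only [Set.mem_ofPred_eq, mul_snd]
  omega

/-! ### The topology attached to a set of nonzero elements -/

/-- The topology on `𝒞₊(p,q)⁰` in which nonzero points are isolated and the neighbourhoods of `0`
are the sets that contain `0` and all but finitely many points of `A`. -/
@[reducible]
def zeroTopology (A : Set CpCarrier) : TopologicalSpace Cp0 where
  IsOpen U := (0 : Cp0) ∈ U → {x : CpCarrier | x ∈ A ∧ (x : Cp0) ∉ U}.Finite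
  isOpen_univ := by simp
  isOpen_inter U V hU hV h := by
    refine ((hU h.1).union (hV h.2)).subset ?_
    rintro x ⟨hx, hxUV⟩
    by_cases hxU : (x : Cp0) ∈ U
    · exact Or.inr ⟨hx, fun hxV => hxUV ⟨hxU, hxV⟩⟩
    · exact Or.inl ⟨hx, hxU⟩
  isOpen_sUnion S hS := by
    rintro ⟨U, hU, h0⟩
    exact (hS U hU h0).subset fun x hx => ⟨hx.1, fun h => hx.2 ⟨U, hU, h⟩⟩

lemma isOpen_zeroTopology {A : Set CpCarrier} {U : Set Cp0} :
    IsOpen[zeroTopology A] U ↔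
      ((0 : Cp0) ∈ U → {x : CpCarrier | x ∈ A ∧ (x : Cp0) ∉ U}.Finite) := Iff.rfl

lemma isOpen_coe_singleton (A : Set CpCarrier) (x : CpCarrier) :
    IsOpen[zeroTopology A] {(x : Cp0)} :=
  isOpen_zeroTopology.2 fun h => absurd h.symm WithZero.coe_ne_zero

lemma isOpen_compl_coe_singleton (A : Set CpCarrier) (x : CpCarrier) :
    IsOpen[zeroTopology A] {(x : Cp0)}ᶜ := by
  refine isOpen_zeroTopology.2 fun _ => (Set.finite_singleton x).subset ?_
  rintro y ⟨-, hy⟩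
  simpa using hy

lemma t2Space_zeroTopology (A : Set CpCarrier) : @T2Space Cp0 (zeroTopology A) := by
  let := zeroTopology A
  refine ⟨fun a b hab => ?_⟩
  -- At least one of two distinct points is nonzero, and it is then a clopen point.
  cases a using WithZero.recZeroCoe with
  | zero =>
    cases b using WithZero.recZeroCoe with
    | zero => exact absurd rfl hab
    | coe b =>
      exact ⟨_, _, isOpen_compl_coe_singleton A b, isOpen_coe_singleton A b, hab, rfl,
        disjoint_compl_left⟩
  | coe a =>
    exact ⟨_, _, isOpen_coe_singleton A a, isOpen_compl_coe_singleton A a, rfl, hab.symm,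
      disjoint_compl_right⟩

lemma isOpen_insert_zero (A : Set CpCarrier) :
    IsOpen[zeroTopology A] (insert 0 (Set.range fun x : A => ((x : CpCarrier) : Cp0))) := by
  refine isOpen_zeroTopology.2 fun _ => Set.finite_empty.subset ?_
  rintro x ⟨hx, hx'⟩
  exact hx' (Or.inr ⟨⟨x, hx⟩, rfl⟩)

lemma locallyCompactSpace_zeroTopology (A : Set CpCarrier) :
    @LocallyCompactSpace Cp0 (zeroTopology A) := by
  let := zeroTopology A
  have := t2Space_zeroTopology A
  have : WeaklyLocallyCompactSpace Cp0 := by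
    refine ⟨fun a => ?_⟩
    cases a using WithZero.recZeroCoe with
    | zero =>
      refine ⟨_, Tendsto.isCompact_insert_range_of_cofinite
        (f := fun x : A => ((x : CpCarrier) : Cp0)) (x := 0) ?_,
        (isOpen_insert_zero A).mem_nhds (Or.inl rfl)⟩
      refine tendsto_nhds.2 fun U hU h0 => ?_
      refine mem_cofinite.2 (Set.Finite.of_finite_image (f := Subtype.val)
        ((isOpen_zeroTopology.1 hU h0).subset ?_) Subtype.val_injective.injOn)
      rintro _ ⟨x, hx, rfl⟩
      exact ⟨x.2, hx⟩
    | coe a =>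
      exact ⟨_, isCompact_singleton, (isOpen_coe_singleton A a).mem_nhds rfl⟩
  infer_instance

/-- A finite-to-one self-map of `𝒞₊(p,q)` that sends almost all of `A` into `A`, extended by
`0 ↦ 0`, is continuous. -/
lemma continuous_zeroTopology {A : Set CpCarrier} (g : CpCarrier → CpCarrier) (G : Cp0 → Cp0)
    (hG : ∀ x : CpCarrier, G x = g x) (hG0 : G 0 = 0) (hg : Tendsto g cofinite cofinite)
    (hA : {x | x ∈ A ∧ g x ∉ A}.Finite) :
    Continuous[zeroTopology A, zeroTopology A] G := by
  refine @continuous_def _ _ (zeroTopology A) (zeroTopology A) G |>.2 fun U hU => ?_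
  refine isOpen_zeroTopology.2 fun h0 => ?_
  have hU' := isOpen_zeroTopology.1 hU (by simpa [hG0] using h0)
  have hpre : (g ⁻¹' {x | x ∈ A ∧ (x : Cp0) ∉ U}).Finite := by
    simpa using hg hU'.compl_mem_cofinite
  refine (hA.union hpre).subset ?_
  rintro x ⟨hx, hxU⟩
  by_cases hgx : g x ∈ A
  · exact Or.inr ⟨hgx, by simpa [hG] using hxU⟩
  · exact Or.inl ⟨hx, hgx⟩

lemma finite_diff_of_zeroTopology_eq {A B : Set CpCarrier}
    (h : zeroTopology A = zeroTopology B) : (A \ B).Finite := by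
  have hB := isOpen_insert_zero B
  rw [← h] at hB
  refine (isOpen_zeroTopology.1 hB (Or.inl rfl)).subset ?_
  rintro x ⟨hxA, hxB⟩
  refine ⟨hxA, ?_⟩
  rintro (h0 | ⟨y, hy⟩)
  · exact WithZero.coe_ne_zero h0
  · exact hxB (WithZero.coe_injective hy ▸ y.2)

/-! ### Regions above a monotone function -/

/-- The set of all `(i,j)` in `𝒞₊(p,q)` with `φ i ≤ j`. -/
def region (φ : ℕ → ℕ) : Set CpCarrier := {x | φ x.1.1 ≤ x.1.2}

lemma continuous_mul_left_region {φ : ℕ → ℕ} (hφ : Monotone φ) (s : Cp0) :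
    Continuous[zeroTopology (region φ), zeroTopology (region φ)] (fun y => s * y) := by
  cases s using WithZero.recZeroCoe with
  | zero => simpa using @continuous_const _ _ (zeroTopology _) (zeroTopology _) (0 : Cp0)
  | coe s =>
    refine continuous_zeroTopology (fun x => s * x) _ (fun x => (WithZero.coe_mul s x).symm)
      (mul_zero _) (tendsto_mul_left_cofinite s) ?_
    -- If `x.1.1 ≤ s.1.2`, the product lies in row `s.1.1`, where
    -- membership in the region only excludes a bounded second coordinate.
    refine (finite_snd_le (φ s.1.1)).subset ?_
    rintro x ⟨hx, hsx⟩
    simp only [region, Set.mem_ofPred_eq, mul_fst, mul_snd] at hx hsx ⊢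
    by_contra! hlt
    apply hsx
    rcases le_total s.1.2 x.1.1 with h | h
    · have := hφ (show s.1.1 + (x.1.1 - s.1.2) ≤ x.1.1 by have := s.2; omega)
      omega
    · rw [Nat.sub_eq_zero_of_le h, Nat.add_zero]
      omega

lemma continuous_mul_right_region (φ : ℕ → ℕ) (s : Cp0) :
    Continuous[zeroTopology (region φ), zeroTopology (region φ)] (fun y => y * s) := by
  cases s using WithZero.recZeroCoe with
  | zero => simpa using @continuous_const _ _ (zeroTopology _) (zeroTopology _) (0 : Cp0)
  | coe s =>
    refine continuous_zeroTopology (fun x => x * s) _ (fun x => (WithZero.coe_mul x s).symm)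
      (zero_mul _) (tendsto_mul_right_cofinite s) ?_
    refine (finite_snd_le s.1.1).subset ?_
    rintro x ⟨hx, hxs⟩
    simp only [region, Set.mem_ofPred_eq, mul_fst, mul_snd] at hx hxs ⊢
    by_contra! hlt
    apply hxs
    have := s.2
    rw [Nat.sub_eq_zero_of_le hlt.le, Nat.add_zero]
    omega

/-- The bound `i ↦ 2 * i + x n`, where `n = i.unpair.1`, so that each bit of the sequence `x` is
used for infinitely many `i`. -/
def bitBound (x : ℕ → Bool) (i : ℕ) : ℕ := 2 * i + (x i.unpair.1).toNat

lemma monotone_bitBound (x : ℕ → Bool) : Monotone (bitBound x) := by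
  refine monotone_nat_of_le_succ fun i => ?_
  have := Bool.toNat_le (x i.unpair.1)
  simp only [bitBound]
  omega

lemma eq_false_of_zeroTopology_eq {x y : ℕ → Bool}
    (h : zeroTopology (region (bitBound x)) = zeroTopology (region (bitBound y))) (n : ℕ)
    (hx : x n = false) : y n = false := by
  by_contra hy
  rw [Bool.not_eq_false] at hy
  -- The points `(i, 2 * i)` with `i` coding a pair `(n, m)` lie in one region but not the other.
  let g : ℕ → CpCarrier := fun m => ⟨(Nat.pair n m, 2 * Nat.pair n m), by dsimp only; omega⟩
  have hg : Function.Injective g := fun a b hab =>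
    (Nat.pair_eq_pair.1 (congrArg (fun z : CpCarrier => z.1.1) hab)).2
  refine Set.infinite_range_of_injective hg
    ((finite_diff_of_zeroTopology_eq h).subset ?_)
  rintro _ ⟨m, rfl⟩
  simp [g, region, bitBound, hx, hy]

lemma zeroTopology_bitBound_injective :
    Function.Injective fun x : ℕ → Bool => zeroTopology (region (bitBound x)) := by
  intro x y h
  funext n
  have h₁ := eq_false_of_zeroTopology_eq h n
  have h₂ := eq_false_of_zeroTopology_eq h.symm n
  cases hx : x n <;> cases hy : y n <;> simp_all

/-! ### Automorphisms are trivial -/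

/-- The idempotent `(k,k)`. -/
def diagElem (k : ℕ) : CpCarrier := CpElem k k le_rfl

lemma diagElem_mul_eq_iff (k : ℕ) (x : CpCarrier) : diagElem k * x = x ↔ k ≤ x.1.1 := by
  rw [Subtype.ext_iff, Prod.ext_iff, mul_fst, mul_snd]
  simp only [diagElem, CpElem]
  omega

lemma mul_diagElem_eq_iff (k : ℕ) (x : CpCarrier) : x * diagElem k = x ↔ k ≤ x.1.2 := by
  rw [Subtype.ext_iff, Prod.ext_iff, mul_fst, mul_snd]
  simp only [diagElem, CpElem]
  omega

lemma exists_eq_diagElem {x : CpCarrier} (h : x * x = x) : ∃ k, x = diagElem k := by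
  refine ⟨x.1.1, ?_⟩
  have := congrArg (fun z : CpCarrier => z.1.2) h
  have hx := x.2
  simp only [mul_snd] at this
  refine Subtype.ext (Prod.ext rfl ?_)
  simp only [diagElem, CpElem]
  omega

section Automorphism

lemma automorphism_zero (f : Cp0 ≃ Cp0) (hf : ∀ a b, f (a * b) = f a * f b) : f 0 = 0 := by
  simpa using hf 0 (f.symm 0)

lemma automorphism_symm_mul (f : Cp0 ≃ Cp0) (hf : ∀ a b, f (a * b) = f a * f b) (a b : Cp0) :
    f.symm (a * b) = f.symm a * f.symm b := by
  apply f.injective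
  simp [hf]

lemma exists_automorphism_coe (f : Cp0 ≃ Cp0) (hf : ∀ a b, f (a * b) = f a * f b)
    (x : CpCarrier) : ∃ y : CpCarrier, f x = y := by
  have h : f x ≠ 0 := by
    rw [← automorphism_zero f hf]
    exact fun h => WithZero.coe_ne_zero (f.injective h)
  exact ⟨_, (WithZero.coe_unzero h).symm⟩

/-- An automorphism moves no idempotent down the chain: it is injective and monotone on
idempotents, so their indices cannot decrease. -/
lemma exists_automorphism_diagElem (f : Cp0 ≃ Cp0) (hf : ∀ a b, f (a * b) = f a * f b) (k : ℕ) :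
    ∃ m, k ≤ m ∧ f (diagElem k) = diagElem m := by
  have key : ∀ k, ∃ m, f (diagElem k) = diagElem m := by
    intro k
    obtain ⟨y, hy⟩ := exists_automorphism_coe f hf (diagElem k)
    have hyy : y * y = y := by
      apply WithZero.coe_injective
      rw [WithZero.coe_mul, ← hy, ← hf, ← WithZero.coe_mul,
        (diagElem_mul_eq_iff k (diagElem k)).2 le_rfl]
    obtain ⟨m, rfl⟩ := exists_eq_diagElem hyy
    exact ⟨m, hy⟩
  choose σ hσ using key
  have hmono : StrictMono σ := by
    refine strictMono_nat_of_lt_succ fun n => lt_of_le_of_ne ?_ fun h => ?_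
    · refine (diagElem_mul_eq_iff (σ n) (diagElem (σ (n + 1)))).1 (WithZero.coe_injective ?_)
      rw [WithZero.coe_mul, ← hσ, ← hσ, ← hf, ← WithZero.coe_mul,
        (diagElem_mul_eq_iff n (diagElem (n + 1))).2 n.le_succ]
    · have h' : f (diagElem n) = f (diagElem (n + 1)) := by rw [hσ, hσ, h]
      have := congrArg (fun z : CpCarrier => z.1.1) (WithZero.coe_injective (f.injective h'))
      simp [diagElem, CpElem] at this
  exact ⟨σ k, hmono.le_apply, hσ k⟩

lemma automorphism_diagElem (f : Cp0 ≃ Cp0) (hf : ∀ a b, f (a * b) = f a * f b) (k : ℕ) :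
    f (diagElem k) = diagElem k := by
  obtain ⟨m, hkm, hm⟩ := exists_automorphism_diagElem f hf k
  obtain ⟨n, hmn, hn⟩ := exists_automorphism_diagElem f.symm (automorphism_symm_mul f hf) m
  rw [← hm, f.symm_apply_apply] at hn
  have hkn : k = n := congrArg (fun z : CpCarrier => z.1.1) (WithZero.coe_injective hn)
  rw [hm, show m = k by omega]

/-- `𝒞₊(p,q)⁰` has no nontrivial automorphism. -/
lemma automorphism_apply (f : Cp0 ≃ Cp0) (hf : ∀ a b, f (a * b) = f a * f b) (a : Cp0) :
    f a = a := by
  cases a using WithZero.recZeroCoe with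
  | zero => exact automorphism_zero f hf
  | coe x =>
    obtain ⟨y, hy⟩ := exists_automorphism_coe f hf x
    have hfst : ∀ k, k ≤ x.1.1 ↔ k ≤ y.1.1 := fun k => by
      rw [← diagElem_mul_eq_iff, ← diagElem_mul_eq_iff, ← WithZero.coe_inj (a := diagElem k * x),
        ← WithZero.coe_inj (a := diagElem k * y),
        ← f.apply_eq_iff_eq, WithZero.coe_mul, WithZero.coe_mul, hf, hy,
        automorphism_diagElem f hf]
    have hsnd : ∀ k, k ≤ x.1.2 ↔ k ≤ y.1.2 := fun k => by
      rw [← mul_diagElem_eq_iff, ← mul_diagElem_eq_iff, ← WithZero.coe_inj (a := x * diagElem k),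
        ← WithZero.coe_inj (a := y * diagElem k),
        ← f.apply_eq_iff_eq, WithZero.coe_mul, WithZero.coe_mul, hf, hy,
        automorphism_diagElem f hf]
    have hxy : x = y :=
      Subtype.ext (Prod.ext (eq_of_forall_le_iff hfst) (eq_of_forall_le_iff hsnd))
    rw [hy, hxy]

end Automorphism

/-! ### Continuum many topologies -/

/-- There are continuum many Hausdorff locally compact shift-continuous topologies on
`𝒞₊(p,q)⁰`, pairwise distinct up to topological isomorphism. -/
theorem continuum_many_locally_compact_shift_continuous_topologies :
    ∃ T : Set (TopologicalSpace Cp0),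
      Cardinal.mk T = Cardinal.continuum ∧
      (∀ τ ∈ T, @T2Space Cp0 τ ∧ @LocallyCompactSpace Cp0 τ ∧
        ∀ s : Cp0, Continuous[τ, τ] (fun y => s * y) ∧ Continuous[τ, τ] (fun y => y * s)) ∧
      ∀ τ₁ ∈ T, ∀ τ₂ ∈ T, τ₁ ≠ τ₂ →
        ¬ ∃ f : Cp0 ≃ Cp0, (∀ a b : Cp0, f (a * b) = f a * f b) ∧
            Continuous[τ₁, τ₂] f ∧ Continuous[τ₂, τ₁] f.symm := by
  refine ⟨Set.range fun x : ℕ → Bool => zeroTopology (region (bitBound x)), ?_, ?_, ?_⟩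
  · rw [Cardinal.mk_range_eq _ zeroTopology_bitBound_injective]
    simp
  · rintro _ ⟨x, rfl⟩
    exact ⟨t2Space_zeroTopology _, locallyCompactSpace_zeroTopology _, fun s =>
      ⟨continuous_mul_left_region (monotone_bitBound x) s, continuous_mul_right_region _ s⟩⟩
  · rintro τ₁ - τ₂ - hne ⟨f, hf, hc, hc'⟩
    obtain rfl : f = Equiv.refl _ := Equiv.ext (automorphism_apply f hf)
    exact hne (le_antisymm (continuous_id_iff_le.1 hc) (continuous_id_iff_le.1 hc'))
end

section
/- Let (ω,+)⁰ = ℕ∞ = WithTop ℕ with its addition, and let τ be any Hausdorff locally compact shift-continuous topology on (ω,+)⁰. If U is a compact open neighbourhood of ∞ in ((ω,+)⁰, τ) such that the complement ℕ \ U is infinite, then a contradiction follows; equivalently, if τ is non-discrete then for every compact open neighbourhood U of ∞ the set ℕ \ U is finite, and hence τ is compact. -/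
open Topology

/-!
A countable locally compact Hausdorff space is Baire, so its isolated points are dense. Hence
isolated natural numbers occur beyond every bound, and pulling `{m}` back along `x ↦ x + k` shows
that every natural number is isolated; as `τ` is not discrete, `⊤` is not isolated.

Let `U` be a compact open neighbourhood of `⊤`. The set `{x ∈ U | x + 1 ∉ U}` is compact and consists
of isolated points, so it is finite: for all large `n`, `n ∈ U` implies `n + 1 ∈ U`. Since `⊤` is
not isolated, `U` contains arbitrarily large natural numbers, hence all sufficiently large ones.
Finally, any compact neighbourhood of `⊤` is open and so has finite complement, which makes
the whole space compact.
-/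

/-- By the Baire category theorem, isolated points are dense in a countable locally compact
Hausdorff space. -/
theorem exists_isOpen_singleton_mem_of_countable {X : Type*} [TopologicalSpace X] [T2Space X]
    [LocallyCompactSpace X] [Countable X] {V : Set X} (hV : IsOpen V) (hne : V.Nonempty) :
    ∃ x ∈ V, IsOpen ({x} : Set X) := by
  have hd : Dense (⋃ x : X, interior ({x} : Set X)) :=
    dense_iUnion_interior_of_closed (fun x => isClosed_singleton) (Set.iUnion_of_singleton X)
  obtain ⟨y, hyV, hy⟩ := hd.inter_open_nonempty V hV hne
  obtain ⟨x, hx⟩ := Set.mem_iUnion.1 hy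
  have hyx : y ∈ ({x} : Set X) := interior_subset hx
  obtain rfl : y = x := hyx
  exact ⟨y, hyV, subset_interior_iff_isOpen.1 (Set.singleton_subset_iff.2 hx)⟩

theorem isOpen_singleton_natCast_of_shift_continuous [TopologicalSpace (WithTop ℕ)]
    [T2Space (WithTop ℕ)] [LocallyCompactSpace (WithTop ℕ)]
    (hsc : ∀ a : WithTop ℕ, Continuous (fun b => b + a)) (n : ℕ) :
    IsOpen ({(n : WithTop ℕ)} : Set (WithTop ℕ)) := by
  have hfin : (insert ⊤ ((fun k : ℕ => (k : WithTop ℕ)) '' Set.Iio n)).Finite :=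
    ((Set.finite_Iio n).image _).insert _
  obtain ⟨x, hx, hxo⟩ := exists_isOpen_singleton_mem_of_countable hfin.isClosed.isOpen_compl
    ⟨(n : WithTop ℕ), by simp⟩
  induction x using WithTop.recTopCoe with
  | top => simp at hx
  | coe m =>
    have hnm : n ≤ m := by
      by_contra h
      exact hx (Or.inr ⟨m, not_le.1 h, rfl⟩)
    convert hxo.preimage (hsc ((m - n : ℕ) : WithTop ℕ)) using 1
    ext y
    induction y using WithTop.recTopCoe with
    | top => simp
    | coe k =>
      have hk : k = n ↔ k + (m - n) = m := by omega
      exact (WithTop.coe_inj (a := k) (b := n)).trans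
        (hk.trans (WithTop.coe_inj (a := k + (m - n)) (b := m)).symm)

theorem finite_compl_of_isCompact_of_isOpen [TopologicalSpace (WithTop ℕ)]
    [T2Space (WithTop ℕ)]
    (hsc : ∀ a : WithTop ℕ, Continuous (fun b => b + a))
    (hiso : ∀ n : ℕ, IsOpen ({(n : WithTop ℕ)} : Set (WithTop ℕ)))
    (htop : ¬ IsOpen ({⊤} : Set (WithTop ℕ)))
    {U : Set (WithTop ℕ)} (hU : IsCompact U) (hUo : IsOpen U) (hUt : ⊤ ∈ U) :
    {n : ℕ | (n : WithTop ℕ) ∉ U}.Finite := by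
  have hK : IsCompact (U \ (fun b => b + 1) ⁻¹' U) := hU.diff (hUo.preimage (hsc 1))
  have hKfin : (U \ (fun b => b + 1) ⁻¹' U).Finite := by
    obtain ⟨t, -, ht⟩ := hK.elim_nhds_subcover (fun x => {x}) (by
      intro x hx
      induction x using WithTop.recTopCoe with
      | top => exact absurd hUt (by simpa using hx.2)
      | coe n => exact (hiso n).mem_nhds rfl)
    exact t.finite_toSet.subset fun x hx => by simpa using ht hx
  obtain ⟨N, hN⟩ := (hKfin.preimage
    (f := fun n : ℕ => (n : WithTop ℕ)) (WithTop.coe_injective.injOn)).bddAbove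
  obtain ⟨n, hn, hnU⟩ : ∃ n : ℕ, N < n ∧ (n : WithTop ℕ) ∈ U := by
    by_contra! h
    apply htop
    have hfin : ((fun k : ℕ => (k : WithTop ℕ)) '' Set.Iic N).Finite :=
      (Set.finite_Iic N).image _
    convert hUo.sdiff hfin.isClosed using 1
    ext y
    induction y using WithTop.recTopCoe with
    | top => simp [hUt]
    | coe k =>
      refine iff_of_false (by simp) fun hk => ?_
      rcases le_or_gt k N with hkN | hkN
      · exact hk.2 ⟨k, hkN, rfl⟩
      · exact h k hkN hk.1
  have hall : ∀ m, n ≤ m → (m : WithTop ℕ) ∈ U := by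
    intro m hm
    induction m, hm using Nat.le_induction with
    | base => exact hnU
    | succ m hm ih =>
      by_contra hc
      have : m ≤ N := hN ⟨ih, by simpa using hc⟩
      omega
  refine (Set.finite_Iio n).subset fun m hm => ?_
  by_contra h
  exact hm (hall m (not_lt.1 h))

/-- Let `τ` be a Hausdorff locally compact shift-continuous topology on
`(ω,+)⁰ = WithTop ℕ`. If `τ` is non-discrete, then for every compact open
neighbourhood `U` of `∞ = ⊤` the set `ℕ \ U` is finite, and hence `τ` is compact. -/
theorem nondiscrete_locally_compact_shift_continuous_topology_on_nat_with_zero_is_compact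
    (τ : TopologicalSpace (WithTop ℕ)) (hT2 : @T2Space (WithTop ℕ) τ)
    (hLC : @LocallyCompactSpace (WithTop ℕ) τ)
    (hsc : ∀ a : WithTop ℕ,
      Continuous[τ, τ] (fun b => a + b) ∧ Continuous[τ, τ] (fun b => b + a))
    (hnd : τ ≠ ⊥) :
    (∀ U : Set (WithTop ℕ), @IsCompact (WithTop ℕ) τ U → IsOpen[τ] U → (⊤ : WithTop ℕ) ∈ U →
      {n : ℕ | (↑n : WithTop ℕ) ∉ U}.Finite) ∧
    @CompactSpace (WithTop ℕ) τ := by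
  have hiso := isOpen_singleton_natCast_of_shift_continuous fun a => (hsc a).2
  have htop : ¬ IsOpen ({⊤} : Set (WithTop ℕ)) := by
    intro h
    refine hnd (discreteTopology_iff_isOpen_singleton.2 fun x => ?_).eq_bot
    induction x using WithTop.recTopCoe with
    | top => exact h
    | coe n => exact hiso n
  have key : ∀ U : Set (WithTop ℕ), IsCompact U → IsOpen U → (⊤ : WithTop ℕ) ∈ U →
      {n : ℕ | (↑n : WithTop ℕ) ∉ U}.Finite := fun U hU hUo hUt =>
    finite_compl_of_isCompact_of_isOpen (fun a => (hsc a).2) hiso htop hU hUo hUt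
  refine ⟨key, ?_⟩
  obtain ⟨K, hK, hKt⟩ := exists_compact_mem_nhds (⊤ : WithTop ℕ)
  have hKo : IsOpen K := by
    refine isOpen_iff_mem_nhds.2 fun x hx => ?_
    induction x using WithTop.recTopCoe with
    | top => exact hKt
    | coe n => exact Filter.mem_of_superset ((hiso n).mem_nhds rfl) (Set.singleton_subset_iff.2 hx)
  have hfin := (key K hK hKo (mem_of_mem_nhds hKt)).image (fun n : ℕ => (n : WithTop ℕ))
  refine ⟨?_⟩
  convert hK.union hfin.isCompact using 1
  refine (Set.eq_univ_of_forall fun x => ?_).symm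
  by_cases hx : x ∈ K
  · exact Or.inl hx
  induction x using WithTop.recTopCoe with
  | top => exact absurd (mem_of_mem_nhds hKt) hx
  | coe n => exact Or.inr ⟨n, hx, rfl⟩
end
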